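/- Let d, N ≥ 1, let A be a symmetric d×d real matrix, let V be a d×d real matrix, and let α : ℝ → ℝ. Let W : ℝ × ℝ^d → ℝ^d be continuously differentiable, with spatial Jacobian J(t, x) (the derivative of W(t, ·) at x), and let X₁, …, X_N : ℝ → ℝ^d be differentiable curves satisfying X_i'(t) = (1/N) Σ_{j=1}^N ⟨X_j(t), A X_i(t)⟩ W(t, X_j(t)) for all i and t. Suppose that for all t ∈ ℝ and x ∈ ℝ^d: ∂_t W(t, x) = −α(t) W(t, x) − (1/N) Σ_{j=1}^N [ ⟨W(t, x), W(t, X_j(t))⟩ A X_j(t) + ⟨x, A X_j(t)⟩ J(t, x) W(t, X_j(t)) ] + V x. Then the curves Y_i(t) := W(t, X_i(t)) are differentiable and satisfy Y_i'(t) = −α(t) Y_i(t) − (1/N) Σ_{j=1}^N ⟨Y_i(t), Y_j(t)⟩ A X_j(t) + V X_i(t) for all i and t. -/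

import Mathlib

/-!
Along a trajectory, `Y i = W (·, X i)` has derivative `∂ₜW + J (X i)'`. Substituting the velocity of
`X i` and pulling the scalars out of the linear map `J` gives
`J (X i)' = N⁻¹ ∑ j, ⟪X j, A (X i)⟫ J W(t, X j)`. Since `A` is symmetric,
`⟪X j, A (X i)⟫ = ⟪X i, A (X j)⟫`, so this is exactly the transport term that `∂ₜW` carries with the
opposite sign.
-/

open MeasureTheory Real Matrix
open scoped RealInnerProductSpace

noncomputable section

/-- Matrix–vector multiplication on Euclidean space. -/
def mv {d : ℕ} (A : Matrix (Fin d) (Fin d) ℝ) (x : EuclideanSpace ℝ (Fin d)) :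
    EuclideanSpace ℝ (Fin d) := Matrix.toEuclideanLin A x

section CurveDerivative

variable {𝕜 E F G : Type*} [NontriviallyNormedField 𝕜]
  [NormedAddCommGroup E] [NormedSpace 𝕜 E] [NormedAddCommGroup F] [NormedSpace 𝕜 F]
  [NormedAddCommGroup G] [NormedSpace 𝕜 G]

lemma hasDerivAt_comp_prodMk_left {W : 𝕜 × E → F} {t : 𝕜} {x : E}
    (hW : DifferentiableAt 𝕜 W (t, x)) :
    HasDerivAt (fun s => W (s, x)) (fderiv 𝕜 W (t, x) (1, 0)) t :=
  hW.hasFDerivAt.comp_hasDerivAt (f := fun s => (s, x)) t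
    ((hasDerivAt_id t).prodMk (hasDerivAt_const t x))

lemma fderiv_comp_prodMk_right_apply
    {W : G × E → F} {g : G} {x : E} (hW : DifferentiableAt 𝕜 W (g, x)) (v : E) :
    fderiv 𝕜 (fun y => W (g, y)) x v = fderiv 𝕜 W (g, x) (0, v) := by
  have hcomp : HasFDerivAt (fun y => W (g, y))
      ((fderiv 𝕜 W (g, x)).comp (ContinuousLinearMap.inr 𝕜 G E)) x :=
    hW.hasFDerivAt.comp x (hasFDerivAt_prodMk_right g x)
  rw [hcomp.fderiv, ContinuousLinearMap.comp_apply, ContinuousLinearMap.inr_apply]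

lemma hasDerivAt_along_curve {W : 𝕜 × E → F} {γ : 𝕜 → E} {t : 𝕜} {w : F} {v : E}
    (hW : DifferentiableAt 𝕜 W (t, γ t)) (hγ : HasDerivAt γ v t)
    (hdtW : HasDerivAt (fun s => W (s, γ t)) w t) :
    HasDerivAt (fun s => W (s, γ s)) (w + fderiv 𝕜 (fun y => W (t, y)) (γ t) v) t := by
  have htotal : HasDerivAt (fun s => W (s, γ s)) (fderiv 𝕜 W (t, γ t) (1, v)) t :=
    hW.hasFDerivAt.comp_hasDerivAt t ((hasDerivAt_id t).prodMk hγ)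
  have htime : fderiv 𝕜 W (t, γ t) (1, 0) = w :=
    (hasDerivAt_comp_prodMk_left hW).unique hdtW
  rwa [← htime, fderiv_comp_prodMk_right_apply hW, ← map_add, Prod.mk_add_mk, add_zero, zero_add]

end CurveDerivative

section Attention

variable {ι E : Type*} [Fintype ι] [NormedAddCommGroup E] [InnerProductSpace ℝ E]

lemma inner_apply_swap_of_isSymmetric {A : E →ₗ[ℝ] E} (hA : A.IsSymmetric) (x y : E) :
    ⟪x, A y⟫ = ⟪y, A x⟫ := by
  rw [← hA x y, real_inner_comm]

lemma map_smul_sum_inner_smul_of_isSymmetric {F G : Type*}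
    [AddCommGroup F] [Module ℝ F] [AddCommGroup G] [Module ℝ G]
    {A : E →ₗ[ℝ] E} (hA : A.IsSymmetric) (L : F →ₗ[ℝ] G) (c : ℝ) (x : E) (y : ι → E) (w : ι → F) :
    L (c • ∑ j, ⟪y j, A x⟫ • w j) = c • ∑ j, ⟪x, A (y j)⟫ • L (w j) := by
  simp only [map_smul, map_sum, inner_apply_swap_of_isSymmetric hA _ x]

theorem stmt12_general (c : ℝ) {A : E →ₗ[ℝ] E} (hA : A.IsSymmetric) (V : E → E) (α : ℝ → ℝ)
    (W : ℝ × E → E) (X : ι → ℝ → E) (hW : ∀ i t, DifferentiableAt ℝ W (t, X i t))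
    (hX : ∀ i t, HasDerivAt (X i) (c • ∑ j, ⟪X j t, A (X i t)⟫ • W (t, X j t)) t)
    (hdtW : ∀ i t, HasDerivAt (fun s => W (s, X i t))
      (-(α t) • W (t, X i t)
        - c • ∑ j, (⟪W (t, X i t), W (t, X j t)⟫ • A (X j t)
            + ⟪X i t, A (X j t)⟫ • fderiv ℝ (fun y => W (t, y)) (X i t) (W (t, X j t)))
        + V (X i t)) t)
    (i : ι) (t : ℝ) :
    HasDerivAt (fun s => W (s, X i s))
      (-(α t) • W (t, X i t)
        - c • ∑ j, ⟪W (t, X i t), W (t, X j t)⟫ • A (X j t)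
        + V (X i t)) t := by
  have hjacobian :
      fderiv ℝ (fun y => W (t, y)) (X i t) (c • ∑ j, ⟪X j t, A (X i t)⟫ • W (t, X j t))
        = c • ∑ j, ⟪X i t, A (X j t)⟫ • fderiv ℝ (fun y => W (t, y)) (X i t) (W (t, X j t)) :=
    map_smul_sum_inner_smul_of_isSymmetric hA
      (fderiv ℝ (fun y => W (t, y)) (X i t)).toLinearMap c (X i t) (X · t) (fun j => W (t, X j t))
  refine (hasDerivAt_along_curve (hW i t) (hX i t) (hdtW i t)).congr_deriv ?_
  rw [hjacobian, Finset.sum_add_distrib, smul_add]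
  abel

end Attention

lemma isSymmetric_toEuclideanLin_of_isSymm {n : Type*} [Fintype n] [DecidableEq n]
    {A : Matrix n n ℝ} (hA : A.IsSymm) : A.toEuclideanLin.IsSymmetric :=
  isSymmetric_toEuclideanLin_iff.mpr (isHermitian_iff_isSymm.mpr hA)

/-- Proposition 4.3: the deterministic inertial interacting particle system associated
to the accelerated linear attention PDE. The curves `Y_i(t) = W(t, X_i(t))` satisfy
`Y_i' = −α Y_i − (1/N) Σ_j ⟨Y_i, Y_j⟩ A X_j + V X_i`, the Jacobian terms cancelling
by the chain rule. -/
theorem stmt12 {d N : ℕ} (hd : 1 ≤ d) (hN : 1 ≤ N)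
    (A : Matrix (Fin d) (Fin d) ℝ) (hA : A.IsSymm)
    (V : Matrix (Fin d) (Fin d) ℝ) (α : ℝ → ℝ)
    (W : ℝ × EuclideanSpace ℝ (Fin d) → EuclideanSpace ℝ (Fin d))
    (hW : ContDiff ℝ 1 W)
    (X : Fin N → ℝ → EuclideanSpace ℝ (Fin d))
    (hX : ∀ (i : Fin N) (t : ℝ), HasDerivAt (X i)
      ((N : ℝ)⁻¹ • ∑ j : Fin N, (⟪X j t, mv A (X i t)⟫ : ℝ) • W (t, X j t)) t)
    (hdtW : ∀ (t : ℝ) (x : EuclideanSpace ℝ (Fin d)),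
      HasDerivAt (fun s => W (s, x))
        (-(α t) • W (t, x)
          - (N : ℝ)⁻¹ • ∑ j : Fin N,
              ((⟪W (t, x), W (t, X j t)⟫ : ℝ) • mv A (X j t)
                + (⟪x, mv A (X j t)⟫ : ℝ) •
                    (fderiv ℝ (fun y => W (t, y)) x) (W (t, X j t)))
          + mv V x) t) :
    ∀ (i : Fin N) (t : ℝ),
      HasDerivAt (fun s => W (s, X i s))
        (-(α t) • W (t, X i t)
          - (N : ℝ)⁻¹ • ∑ j : Fin N, (⟪W (t, X i t), W (t, X j t)⟫ : ℝ) • mv A (X j t)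
          + mv V (X i t)) t := by
  exact stmt12_general (N : ℝ)⁻¹ (isSymmetric_toEuclideanLin_of_isSymm hA) (mv V) α W X
    (fun i t => hW.differentiable one_ne_zero (t, X i t)) hX (fun i t => hdtW t (X i t))

end
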